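/- For each positive integer q, the bishops counting function u_B(q;n) on the square board is a quasipolynomial in n whose period divides 2^{q−1}: there exist polynomials f_0, …, f_{2^{q−1}−1} with rational coefficients, each of degree 2q, such that u_B(q;n) = f_{n mod 2^{q−1}}(n) for every integer n ≥ 0. -/

import Mathlib

open Polynomial in
/-- `F` agrees on naturals with a polynomial of degree at most `d` and `d`-th coefficient `a`. -/
def BQ (d : ℕ) (a : ℚ) (F : ℕ → ℚ) : Prop :=
  ∃ p : ℚ[X], p.natDegree ≤ d ∧ p.coeff d = a ∧ ∀ j : ℕ, F j = p.eval (j : ℚ)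

theorem BQ.add {d : ℕ} {a b : ℚ} {F G : ℕ → ℚ} (hF : BQ d a F) (hG : BQ d b G) :
    BQ d (a + b) (fun j => F j + G j) := by
  obtain ⟨p, hp, hpa, hpe⟩ := hF
  obtain ⟨r, hr, hra, hre⟩ := hG
  refine ⟨p + r, Polynomial.natDegree_add_le_of_degree_le hp hr, by simp [hpa, hra], ?_⟩
  intro j
  simp [hpe, hre]

theorem BQ.mul {d e : ℕ} {a b : ℚ} {F G : ℕ → ℚ} (hF : BQ d a F) (hG : BQ e b G) :
    BQ (d + e) (a * b) (fun j => F j * G j) := by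
  obtain ⟨p, hp, hpa, hpe⟩ := hF
  obtain ⟨r, hr, hra, hre⟩ := hG
  refine ⟨p * r, Polynomial.natDegree_mul_le_of_le hp hr, ?_, ?_⟩
  · rw [Polynomial.coeff_mul_add_eq_of_natDegree_le hp hr, hpa, hra]
  intro j
  simp [hpe, hre]

theorem BQ.lift {d e : ℕ} {a : ℚ} {F : ℕ → ℚ} (hF : BQ d a F) (h : d < e) : BQ e 0 F := by
  obtain ⟨p, hp, hpa, hpe⟩ := hF
  exact ⟨p, by omega, Polynomial.coeff_eq_zero_of_natDegree_lt (by omega), hpe⟩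

theorem BQ.lin (a b : ℚ) : BQ 1 a (fun j => a * j + b) := by
  refine ⟨Polynomial.C a * Polynomial.X + Polynomial.C b, Polynomial.natDegree_linear_le, ?_, ?_⟩
  · simp [Polynomial.coeff_C]
  · intro j; simp

theorem BQ.const (a : ℚ) : BQ 0 a (fun _ => a) := by
  refine ⟨Polynomial.C a, by simp, by simp, ?_⟩
  intro j; simp

theorem BQ.sum {ι : Type*} (s : Finset ι) (d : ℕ) (a : ι → ℚ) (F : ι → ℕ → ℚ)
    (h : ∀ i ∈ s, BQ d (a i) (F i)) : BQ d (∑ i ∈ s, a i) (fun j => ∑ i ∈ s, F i j) := by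
  classical
  induction s using Finset.induction_on with
  | empty =>
    refine ⟨0, by simp, by simp, by simp⟩
  | insert i s hi ih =>
    simp only [Finset.sum_insert hi]
    exact (h i (by simp)).add (ih fun k hk => h k (by simp [hk]))

theorem bernoulli_natDegree_le (n : ℕ) : (Polynomial.bernoulli n).natDegree ≤ n := by
  rw [Polynomial.natDegree_le_iff_coeff_eq_zero]
  intro N hN
  rw [Polynomial.coeff_bernoulli, if_neg (by omega)]

theorem BQ.antidiff {d : ℕ} {a : ℚ} {F G : ℕ → ℚ} (hF : BQ d a F)
    (hG : ∀ j, G (j + 1) = G j + F j) : BQ (d + 1) (a / (d + 1)) G := by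
  obtain ⟨p, hp, hpa, hpe⟩ := hF
  set R : Polynomial ℚ := ∑ i ∈ Finset.range (d + 1),
    Polynomial.C (p.coeff i / (i + 1)) * Polynomial.bernoulli (i + 1) with hR
  have hRd : R.natDegree ≤ d + 1 := by
    apply Polynomial.natDegree_sum_le_of_forall_le
    intro i hi
    refine (Polynomial.natDegree_C_mul_le _ _).trans ((bernoulli_natDegree_le _).trans ?_)
    have := Finset.mem_range.1 hi
    omega
  have hRc : R.coeff (d + 1) = a / (d + 1) := by
    rw [hR, Polynomial.finsetSum_coeff, Finset.sum_eq_single d]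
    · simp [Polynomial.coeff_bernoulli, hpa]
    · intro i hi hid
      have := Finset.mem_range.1 hi
      rw [Polynomial.coeff_C_mul, Polynomial.coeff_bernoulli, if_neg (by omega), mul_zero]
    · simp
  have hRe : ∀ x : ℚ, R.eval (1 + x) = R.eval x + p.eval x := by
    intro x
    rw [Polynomial.eval_eq_sum_range' (Nat.lt_succ_of_le hp) x, hR, Polynomial.eval_finsetSum,
      Polynomial.eval_finsetSum, ← Finset.sum_add_distrib]
    apply Finset.sum_congr rfl
    intro i _
    rw [Polynomial.eval_mul, Polynomial.eval_mul, Polynomial.bernoulli_eval_one_add]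
    have : (i : ℚ) + 1 ≠ 0 := by positivity
    simp
    field_simp
  refine ⟨R + Polynomial.C (G 0 - R.eval 0), ?_, ?_, ?_⟩
  · exact Polynomial.natDegree_add_le_of_degree_le hRd (by simp)
  · simp [hRc, Polynomial.coeff_C]
  · intro j
    induction j with
    | zero => simp
    | succ j ih =>
      rw [hG, ih, hpe]
      have := hRe j
      push_cast
      simp only [Polynomial.eval_add, Polynomial.eval_C]
      rw [add_comm (j : ℚ) 1, this]
      ring

/-- column heights -/
def BH (c : ℕ) (m : ℕ) : ℕ := if m % 2 = 0 then c + m else m + 1 - c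

/-- rook numbers by recursion -/
def BF (c : ℕ) : ℕ → ℕ → ℚ
  | 0, _ => 1
  | _ + 1, 0 => 0
  | k + 1, m + 1 => BF c (k + 1) m + ((BH c m : ℚ) - k) * BF c k m

theorem BF_poly (c : ℕ) (hc : c ≤ 1) (k : ℕ) :
    (∃ a > 0, BQ (2 * k) a (fun j => BF c k (2 * j))) ∧
    (∃ a > 0, BQ (2 * k) a (fun j => BF c k (2 * j + 1))) := by
  induction k with
  | zero =>
    refine ⟨⟨1, by norm_num, ?_⟩, ⟨1, by norm_num, ?_⟩⟩ <;>
    · simp only [BF]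
      exact BQ.const 1
  | succ k ih =>
    obtain ⟨⟨a, ha, hA⟩, ⟨b, hb, hB⟩⟩ := ih
    have h0 : ∀ j, (BH c (2 * j) : ℚ) = 2 * j + c := by
      intro j; simp [BH]; ring
    have h1 : ∀ j, (BH c (2 * j + 1) : ℚ) = 2 * j + (2 - c) := by
      intro j
      rw [BH, if_neg (by omega), Nat.cast_sub (by omega)]
      push_cast; ring
    have e0 : ∀ j, BF c (k + 1) (2 * j + 1) =
        BF c (k + 1) (2 * j) + (2 * (j : ℚ) + (c - k)) * BF c k (2 * j) := by
      intro j; rw [BF, h0]; ring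
    have e1 : ∀ j, BF c (k + 1) (2 * (j + 1)) = BF c (k + 1) (2 * j) +
        ((2 * (j : ℚ) + (c - k)) * BF c k (2 * j)
          + (2 * (j : ℚ) + (2 - c - k)) * BF c k (2 * j + 1)) := by
      intro j
      rw [show 2 * (j + 1) = (2 * j + 1) + 1 by ring, BF, h1, e0]; ring
    have q0 := (BQ.lin 2 ((c : ℚ) - k)).mul hA
    have q1 := (BQ.lin 2 (2 - (c : ℚ) - k)).mul hB
    have q2 := (q0.add q1).antidiff (G := fun j => BF c (k + 1) (2 * j)) e1
    rw [show 1 + 2 * k + 1 = 2 * (k + 1) by ring] at q2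
    refine ⟨⟨_, ?_, q2⟩, ?_⟩
    · positivity
    · have q3 := q2.add (q0.lift (e := 2 * (k + 1)) (by omega))
      simp only [← e0] at q3
      exact ⟨_, by positivity, q3⟩

/-- nonattacking -/
def BOk (S : Finset (ℤ × ℤ)) : Prop :=
  ∀ z ∈ S, ∀ w ∈ S, z ≠ w → z.1 + z.2 ≠ w.1 + w.2 ∧ z.1 - z.2 ≠ w.1 - w.2

open Classical in
/-- nonattacking configurations of size k in A -/
noncomputable def BP (k : ℕ) (A : Finset (ℤ × ℤ)) : Finset (Finset (ℤ × ℤ)) :=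
  (A.powersetCard k).filter BOk

theorem mem_BP {k : ℕ} {A S : Finset (ℤ × ℤ)} : S ∈ BP k A ↔ S ⊆ A ∧ S.card = k ∧ BOk S := by
  simp [BP, Finset.mem_powersetCard, and_assoc]

theorem BOk.mono {S T : Finset (ℤ × ℤ)} (h : BOk T) (hs : S ⊆ T) : BOk S :=
  fun z hz w hw => h z (hs hz) w (hs hw)

theorem BP_zero (A : Finset (ℤ × ℤ)) : (BP 0 A).card = 1 := by
  rw [Finset.card_eq_one]
  refine ⟨∅, ?_⟩
  ext S
  rw [mem_BP]
  simp only [Finset.card_eq_zero, Finset.mem_singleton]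
  constructor
  · tauto
  · rintro rfl
    simp [BOk]

theorem BP_one (A : Finset (ℤ × ℤ)) : (BP 1 A).card = A.card := by
  classical
  rw [BP, Finset.filter_true_of_mem]
  · simp
  · intro S hS
    rw [Finset.mem_powersetCard, Finset.card_eq_one] at hS
    obtain ⟨_, x, rfl⟩ := hS
    intro z hz w hw h
    simp at hz hw
    exact absurd (hz.trans hw.symm) h

theorem BP_step (k : ℕ) (A C : Finset (ℤ × ℤ)) (d : ℤ) (hC : ∀ c ∈ C, c.1 - c.2 = d)
    (hA : ∀ a ∈ A, a.1 - a.2 ≠ d) (hr : ∀ a ∈ A, ∃ c ∈ C, c.1 + c.2 = a.1 + a.2) :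
    ((BP (k + 1) (A ∪ C)).card : ℚ)
      = (BP (k + 1) A).card + ((C.card : ℚ) - k) * (BP k A).card := by
  classical
  have hAC : ∀ x, x ∈ A → x ∉ C := fun x hx hx' => hA x hx (hC x hx')
  have hfree : ∀ S ∈ BP k A,
      ((C.filter fun c => ∀ z ∈ S, z.1 + z.2 ≠ c.1 + c.2).card : ℚ) = C.card - k := by
    intro S hS
    obtain ⟨hSA, hSk, hSok⟩ := mem_BP.1 hS
    have h1 := Finset.card_filter_add_card_filter_not (s := C)
      (fun c => ∀ z ∈ S, z.1 + z.2 ≠ c.1 + c.2)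
    have h2 : (C.filter fun c => ¬ ∀ z ∈ S, z.1 + z.2 ≠ c.1 + c.2).card = S.card := by
      symm
      choose! g hg using hr
      apply Finset.card_bij (fun z _ => g z)
      · intro z hz
        have := hg z (hSA hz)
        simp only [Finset.mem_filter]
        refine ⟨this.1, ?_⟩
        push Not
        exact ⟨z, hz, this.2.symm⟩
      · intro z hz w hw h
        by_contra hne
        have h3 := hg z (hSA hz)
        have h4 := hg w (hSA hw)
        rw [h] at h3
        exact (hSok z hz w hw hne).1 (h3.2.symm.trans h4.2)
      · intro c hc
        simp only [Finset.mem_filter] at hc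
        obtain ⟨hcC, hc⟩ := hc
        push Not at hc
        obtain ⟨z, hz, hzc⟩ := hc
        refine ⟨z, hz, ?_⟩
        have h3 := hg z (hSA hz)
        have h4 := hC _ h3.1
        have h5 := hC _ hcC
        have h6 := h3.2
        ext <;> omega
    have h3 : (C.filter fun c => ∀ z ∈ S, z.1 + z.2 ≠ c.1 + c.2).card + k = C.card := by
      rw [← hSk, ← h2]
      convert! h1
    rw [← h3]; push_cast; ring
  have hsplit := Finset.card_filter_add_card_filter_not (s := BP (k + 1) (A ∪ C))
      (fun S => S ⊆ A)
  have e1 : (BP (k + 1) (A ∪ C)).filter (fun S => S ⊆ A) = BP (k + 1) A := by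
    ext S
    simp only [Finset.mem_filter, mem_BP]
    constructor
    · tauto
    · rintro ⟨h1, h2, h3⟩
      exact ⟨⟨h1.trans Finset.subset_union_left, h2, h3⟩, h1⟩
  have e2 : ((BP (k + 1) (A ∪ C)).filter (fun S => ¬ S ⊆ A)).card =
      ((BP k A).sigma (fun S => C.filter fun c => ∀ z ∈ S, z.1 + z.2 ≠ c.1 + c.2)).card := by
    symm
    apply Finset.card_bij (fun (x : Σ _ : Finset (ℤ × ℤ), ℤ × ℤ) _ => insert x.2 x.1)
    · rintro ⟨S, c⟩ hx
      simp only [Finset.mem_sigma, Finset.mem_filter, mem_BP] at hx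
      obtain ⟨⟨hSA, hSk, hSok⟩, hcC, hc⟩ := hx
      have hcS : c ∉ S := fun h => hAC c (hSA h) hcC
      simp only [Finset.mem_filter, mem_BP]
      refine ⟨⟨?_, ?_, ?_⟩, ?_⟩
      · intro z hz
        rw [Finset.mem_insert] at hz
        rw [Finset.mem_union]
        rcases hz with rfl | hz
        · exact Or.inr hcC
        · exact Or.inl (hSA hz)
      · rw [Finset.card_insert_of_notMem hcS, hSk]
      · intro z hz w hw hne
        rw [Finset.mem_insert] at hz hw
        rcases hz with rfl | hz <;> rcases hw with rfl | hw
        · exact absurd rfl hne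
        · refine ⟨(hc w hw).symm, ?_⟩
          rw [hC z hcC]
          exact (hA w (hSA hw)).symm
        · refine ⟨hc z hz, ?_⟩
          rw [hC w hcC]
          exact hA z (hSA hz)
        · exact hSok z hz w hw hne
      · intro h
        exact hAC c (h (Finset.mem_insert_self _ _)) hcC
    · rintro ⟨S, c⟩ hx ⟨S', c'⟩ hx' h
      simp only [Finset.mem_sigma, Finset.mem_filter, mem_BP] at hx hx' h
      have hcS : c ∉ S := fun h => hAC c (hx.1.1 h) hx.2.1
      have hcS' : c' ∉ S' := fun h => hAC c' (hx'.1.1 h) hx'.2.1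
      have hcc : c = c' := by
        have : c ∈ insert c' S' := h ▸ Finset.mem_insert_self _ _
        rw [Finset.mem_insert] at this
        rcases this with h | h
        · exact h
        · exact absurd hx.2.1 (hAC c (hx'.1.1 h))
      subst hcc
      have : S = S' := by
        rw [← Finset.erase_insert hcS, h, Finset.erase_insert hcS']
      subst this
      rfl
    · intro T hT
      simp only [Finset.mem_filter, mem_BP] at hT
      obtain ⟨⟨hTs, hTk, hTok⟩, hTA⟩ := hT
      obtain ⟨c, hcT, hcA⟩ := Finset.not_subset.1 hTA
      have hcC : c ∈ C := by
        rcases Finset.mem_union.1 (hTs hcT) with h | h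
        · exact absurd h hcA
        · exact h
      refine ⟨⟨T.erase c, c⟩, ?_, Finset.insert_erase hcT⟩
      simp only [Finset.mem_sigma, Finset.mem_filter, mem_BP]
      refine ⟨⟨?_, ?_, hTok.mono (Finset.erase_subset _ _)⟩, hcC, ?_⟩
      · intro z hz
        rw [Finset.mem_erase] at hz
        rcases Finset.mem_union.1 (hTs hz.2) with h | h
        · exact h
        · exact absurd ((hC z h).trans (hC c hcC).symm) (hTok z hz.2 c hcT hz.1).2
      · rw [Finset.card_erase_of_mem hcT, hTk]; rfl
      · intro z hz
        rw [Finset.mem_erase] at hz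
        exact (hTok z hz.2 c hcT hz.1).1
  rw [← hsplit, e1, e2, Finset.card_sigma]
  push_cast
  rw [Finset.sum_congr rfl hfree, Finset.sum_const, nsmul_eq_mul]
  ring

theorem BP_union (q : ℕ) (A B : Finset (ℤ × ℤ))
    (h : ∀ a ∈ A, ∀ b ∈ B, a.1 + a.2 ≠ b.1 + b.2 ∧ a.1 - a.2 ≠ b.1 - b.2) :
    (BP q (A ∪ B)).card =
      ∑ x ∈ Finset.HasAntidiagonal.antidiagonal q, (BP x.1 A).card * (BP x.2 B).card := by
  classical
  have hAB : ∀ x, x ∈ A → x ∉ B := fun x hx hx' => (h x hx x hx').1 rfl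
  have hU : ∀ S, S ⊆ A ∪ B → S.filter (· ∈ A) ∪ S.filter (· ∈ B) = S := by
    intro S hS
    ext z
    simp only [Finset.mem_union, Finset.mem_filter]
    constructor
    · tauto
    · intro hz
      rcases Finset.mem_union.1 (hS hz) with h | h <;> tauto
  have hD : ∀ S : Finset (ℤ × ℤ), Disjoint (S.filter (· ∈ A)) (S.filter (· ∈ B)) := by
    intro S
    rw [Finset.disjoint_left]
    intro z hz hz'
    simp only [Finset.mem_filter] at hz hz'
    exact hAB z hz.2 hz'.2
  have e : (BP q (A ∪ B)).card =
      ((Finset.HasAntidiagonal.antidiagonal q).sigma (fun x => BP x.1 A ×ˢ BP x.2 B)).card := by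
    symm
    apply Finset.card_bij (fun (x : Σ _ : ℕ × ℕ, Finset (ℤ × ℤ) × Finset (ℤ × ℤ)) _ =>
      x.2.1 ∪ x.2.2)
    · rintro ⟨⟨i, j⟩, S, T⟩ hx
      simp only [Finset.mem_sigma, Finset.HasAntidiagonal.mem_antidiagonal, Finset.mem_product, mem_BP] at hx
      obtain ⟨hij, ⟨hSA, hSi, hS⟩, hTB, hTj, hT⟩ := hx
      rw [mem_BP]
      refine ⟨Finset.union_subset_union hSA hTB, ?_, ?_⟩
      · rw [Finset.card_union_of_disjoint, hSi, hTj, hij]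
        rw [Finset.disjoint_left]
        intro z hz hz'
        exact hAB z (hSA hz) (hTB hz')
      · intro z hz w hw hne
        rw [Finset.mem_union] at hz hw
        rcases hz with hz | hz <;> rcases hw with hw | hw
        · exact hS z hz w hw hne
        · exact h z (hSA hz) w (hTB hw)
        · have := h w (hSA hw) z (hTB hz)
          exact ⟨this.1.symm, this.2.symm⟩
        · exact hT z hz w hw hne
    · rintro ⟨⟨i, j⟩, S, T⟩ hx ⟨⟨i', j'⟩, S', T'⟩ hx' he
      simp only [Finset.mem_sigma, Finset.HasAntidiagonal.mem_antidiagonal, Finset.mem_product, mem_BP] at hx hx' he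
      obtain ⟨hij, ⟨hSA, hSi, hS⟩, hTB, hTj, hT⟩ := hx
      obtain ⟨hij', ⟨hSA', hSi', hS'⟩, hTB', hTj', hT'⟩ := hx'
      have hSS : S = S' := by
        ext z
        have := Finset.ext_iff.1 he z
        simp only [Finset.mem_union] at this
        have h1 := @hSA z
        have h2 := @hSA' z
        have h3 := @hTB z
        have h4 := @hTB' z
        have h5 := hAB z
        tauto
      have hTT : T = T' := by
        ext z
        have := Finset.ext_iff.1 he z
        simp only [Finset.mem_union] at this
        have h1 := @hSA z
        have h2 := @hSA' z
        have h3 := @hTB z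
        have h4 := @hTB' z
        have h5 := hAB z
        tauto
      subst hSS hTT hSi hTj hSi' hTj'
      rfl
    · intro S hS
      obtain ⟨hSs, hSq, hSok⟩ := mem_BP.1 hS
      refine ⟨⟨((S.filter (· ∈ A)).card, (S.filter (· ∈ B)).card),
        S.filter (· ∈ A), S.filter (· ∈ B)⟩, ?_, hU S hSs⟩
      simp only [Finset.mem_sigma, Finset.HasAntidiagonal.mem_antidiagonal, Finset.mem_product, mem_BP]
      refine ⟨?_, ⟨?_, trivial, hSok.mono (Finset.filter_subset _ _)⟩, ?_, trivial,
        hSok.mono (Finset.filter_subset _ _)⟩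
      · rw [← Finset.card_union_of_disjoint (hD S), hU S hSs, hSq]
      · intro z hz; exact (Finset.mem_filter.1 hz).2
      · intro z hz; exact (Finset.mem_filter.1 hz).2
  rw [e, Finset.card_sigma]
  simp [Finset.card_product]

/-- the board -/
noncomputable def BB (n : ℕ) : Finset (ℤ × ℤ) := Finset.Icc 1 (n : ℤ) ×ˢ Finset.Icc 1 (n : ℤ)

/-- the diagonals of one colour in increasing order of length -/
def BD (n c i : ℕ) : ℤ := if i % 2 = 0 then (n : ℤ) - c - i else (i : ℤ) + 1 - c - n

/-- one diagonal -/
noncomputable def BC (n : ℕ) (d : ℤ) : Finset (ℤ × ℤ) := (BB n).filter fun z => z.1 - z.2 = d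

/-- first m diagonals of one colour -/
noncomputable def BA (n c m : ℕ) : Finset (ℤ × ℤ) := (BB n).filter fun z => ∃ i < m, z.1 - z.2 = BD n c i

theorem BC_card (n c m : ℕ) (hc : c ≤ 1) (hm : m < n) : (BC n (BD n c m)).card = BH c m := by
  have : (BC n (BD n c m)) = (Finset.Icc (max 1 (1 + BD n c m)) (min n (n + BD n c m))).image
      (fun x => (x, x - BD n c m)) := by
    ext ⟨x, y⟩
    simp only [BC, BB, Finset.mem_filter, Finset.mem_product, Finset.mem_Icc, Finset.mem_image,
      Prod.mk.injEq]
    constructor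
    · rintro ⟨h1, h2⟩
      exact ⟨x, by omega, rfl, by omega⟩
    · rintro ⟨x', h1, rfl, h2⟩
      omega
  rw [this, Finset.card_image_of_injective _ (fun a b h => (Prod.mk.inj h).1), Int.card_Icc]
  unfold BD BH
  split_ifs <;> omega

theorem BA_card (n c : ℕ) (hc : c ≤ 1) (m : ℕ) (hm : m ≤ n) (k : ℕ) :
    ((BP k (BA n c m)).card : ℚ) = BF c k m := by
  induction m generalizing k with
  | zero =>
    cases k with
    | zero => simp [BP_zero, BF]
    | succ k =>
      have : BA n c 0 = ∅ := by simp [BA]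
      rw [this, BF, Nat.cast_eq_zero, Finset.card_eq_zero, Finset.eq_empty_iff_forall_notMem]
      intro S hS
      obtain ⟨h1, h2, _⟩ := mem_BP.1 hS
      rw [Finset.subset_empty] at h1
      simp [h1] at h2
  | succ m ih =>
    cases k with
    | zero => simp [BP_zero, BF]
    | succ k =>
      have hU : BA n c (m + 1) = BA n c m ∪ BC n (BD n c m) := by
        ext z
        simp only [BA, BC, Finset.mem_union, Finset.mem_filter, Nat.lt_succ_iff_lt_or_eq]
        constructor
        · rintro ⟨h1, i, hi | rfl, h2⟩
          · exact Or.inl ⟨h1, i, hi, h2⟩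
          · exact Or.inr ⟨h1, h2⟩
        · rintro (⟨h1, i, hi, h2⟩ | ⟨h1, h2⟩)
          · exact ⟨h1, i, Or.inl hi, h2⟩
          · exact ⟨h1, m, Or.inr rfl, h2⟩
      rw [hU, BP_step k _ _ (BD n c m), ih (by omega), ih (by omega), BC_card n c m hc (by omega), BF]
      · intro z hz
        exact (Finset.mem_filter.1 hz).2
      · rintro ⟨x, y⟩ hz
        simp only [BA, BB, Finset.mem_filter, Finset.mem_product, Finset.mem_Icc] at hz
        obtain ⟨h1, i, hi, h2⟩ := hz
        simp only [h2]
        unfold BD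
        split_ifs <;> omega
      · rintro ⟨x, y⟩ hz
        simp only [BA, BB, Finset.mem_filter, Finset.mem_product, Finset.mem_Icc] at hz
        obtain ⟨h1, i, hi, h2⟩ := hz
        refine ⟨((x + y + BD n c m) / 2, (x + y - BD n c m) / 2), ?_, ?_⟩
        · simp only [BC, BB, Finset.mem_filter, Finset.mem_product, Finset.mem_Icc]
          unfold BD at *
          split_ifs at * <;> omega
        · simp only
          unfold BD at *
          split_ifs at * <;> omega

theorem BB_eq (n : ℕ) : BB n = BA n 0 n ∪ BA n 1 n := by
  ext ⟨x, y⟩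
  simp only [BA, Finset.mem_union, Finset.mem_filter, ← and_or_left]
  refine ⟨fun h => ⟨h, ?_⟩, fun h => h.1⟩
  simp only [BB, Finset.mem_product, Finset.mem_Icc] at h
  by_cases hp : (x - y - n) % 2 = 0
  · left
    by_cases hd : 0 < x - y
    · refine ⟨((n : ℤ) - (x - y)).toNat, by omega, ?_⟩
      unfold BD
      split_ifs <;> omega
    · refine ⟨((n : ℤ) - 1 + (x - y)).toNat, by omega, ?_⟩
      unfold BD
      split_ifs <;> omega
  · right
    by_cases hd : 0 ≤ x - y
    · refine ⟨((n : ℤ) - 1 - (x - y)).toNat, by omega, ?_⟩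
      unfold BD
      split_ifs <;> omega
    · refine ⟨((n : ℤ) + (x - y)).toNat, by omega, ?_⟩
      unfold BD
      split_ifs <;> omega

theorem BB_count (q n : ℕ) : ((BP q (BB n)).card : ℚ) =
    ∑ x ∈ Finset.HasAntidiagonal.antidiagonal q, BF 0 x.1 n * BF 1 x.2 n := by
  rw [BB_eq, BP_union]
  · push_cast
    apply Finset.sum_congr rfl
    intro x _
    rw [BA_card n 0 (by omega) n le_rfl, BA_card n 1 le_rfl n le_rfl]
  · rintro ⟨x, y⟩ h1 ⟨x', y'⟩ h2
    simp only [BA, Finset.mem_filter] at h1 h2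
    obtain ⟨_, i, hi, h1⟩ := h1
    obtain ⟨_, j, hj, h2⟩ := h2
    unfold BD at h1 h2
    simp only
    split_ifs at h1 h2 <;> omega

theorem count_poly (q e : ℕ) (he : e ≤ 1) : ∃ a > 0,
    BQ (2 * q) a (fun j => ((BP q (BB (2 * j + e))).card : ℚ)) := by
  have key : ∀ c ≤ 1, ∀ k, ∃ a > 0, BQ (2 * k) a (fun j => BF c k (2 * j + e)) := by
    intro c hc k
    obtain rfl | rfl : e = 0 ∨ e = 1 := by omega
    · exact (BF_poly c hc k).1
    · exact (BF_poly c hc k).2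
  choose a ha hA using key 0 (by omega)
  choose b hb hB using key 1 le_rfl
  refine ⟨∑ x ∈ Finset.HasAntidiagonal.antidiagonal q, a x.1 * b x.2, ?_, ?_⟩
  · apply Finset.sum_pos
    · intro x _
      exact mul_pos (ha _) (hb _)
    · exact ⟨(0, q), by simp⟩
  · simp only [BB_count]
    apply BQ.sum
    intro x hx
    rw [Finset.HasAntidiagonal.mem_antidiagonal] at hx
    have := (hA x.1).mul (hB x.2)
    rwa [← mul_add, hx] at this

theorem count_poly' (q e : ℕ) (he : e ≤ 1) : ∃ f : Polynomial ℚ,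
    f.degree = ((2 * q : ℕ) : WithBot ℕ) ∧
    ∀ n : ℕ, n % 2 = e → ((BP q (BB n)).card : ℚ) = f.eval (n : ℚ) := by
  obtain ⟨a, ha, p, hp, hpa, hpe⟩ := count_poly q e he
  have hp0 : p.natDegree = 2 * q :=
    Polynomial.natDegree_eq_of_le_of_coeff_ne_zero hp (by rw [hpa]; exact ha.ne')
  have hl : (Polynomial.C (1 / 2 : ℚ) * Polynomial.X
      + Polynomial.C (-(e : ℚ) / 2)).natDegree = 1 :=
    Polynomial.natDegree_linear (by norm_num)
  refine ⟨p.comp (Polynomial.C (1 / 2 : ℚ) * Polynomial.X + Polynomial.C (-(e : ℚ) / 2)), ?_, ?_⟩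
  · have hd := Polynomial.natDegree_comp (p := p)
      (q := Polynomial.C (1 / 2 : ℚ) * Polynomial.X + Polynomial.C (-(e : ℚ) / 2))
    rw [hp0, hl, mul_one] at hd
    rw [← hd]
    apply Polynomial.degree_eq_natDegree
    intro h0
    rw [Polynomial.comp_eq_zero_iff] at h0
    rcases h0 with h0 | h0
    · rw [h0] at hpa
      simp at hpa
      exact ha.ne hpa
    · have := h0.2
      rw [this] at hl
      simp at hl
  · intro n hn
    have h := hpe (n / 2)
    have hn2 : 2 * (n / 2) + e = n := by omega
    have hc : ((n / 2 : ℕ) : ℚ) = 1 / 2 * n + -(e : ℚ) / 2 := by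
      have : (2 : ℚ) * ((n / 2 : ℕ) : ℚ) + e = n := by exact_mod_cast hn2
      linarith
    simp only [hn2] at h
    rw [h, hc, Polynomial.eval_comp]
    simp

/-- the counting function `u_B(q;n)` for `q` nonattacking bishops on the
square board is a quasipolynomial in `n` of degree `2q` whose period divides `2^(q-1)`. -/
theorem stmt_16 (q : ℕ) (hq : 0 < q)
    (u : ℕ → ℕ)
    (hu : ∀ n : ℕ, u n = Set.ncard {S : Finset (ℤ × ℤ) |
      S.card = q ∧
      (∀ z ∈ S, 1 ≤ z.1 ∧ z.1 ≤ (n : ℤ) ∧ 1 ≤ z.2 ∧ z.2 ≤ (n : ℤ)) ∧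
      (∀ z ∈ S, ∀ w ∈ S, z ≠ w →
        z.1 + z.2 ≠ w.1 + w.2 ∧ z.1 - z.2 ≠ w.1 - w.2)}) :
    ∃ f : ℕ → Polynomial ℚ,
      (∀ k < 2 ^ (q - 1), (f k).degree = ((2 * q : ℕ) : WithBot ℕ)) ∧
      (∀ n : ℕ, (u n : ℚ) = (f (n % 2 ^ (q - 1))).eval (n : ℚ)) := by
  classical
  have hu' : ∀ n, u n = (BP q (BB n)).card := by
    intro n
    rw [hu n, ← Set.ncard_coe_finset]
    congr 1
    ext S
    simp only [Set.mem_ofPred_eq, Finset.mem_coe, mem_BP, BOk, Finset.subset_iff, BB,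
      Finset.mem_product, Finset.mem_Icc, and_assoc]
    tauto
  by_cases hq1 : q = 1
  · subst hq1
    refine ⟨fun _ => Polynomial.X ^ 2, fun k _ => by simp, fun n => ?_⟩
    rw [hu', BP_one, BB, Finset.card_product]
    simp [pow_two]
  · obtain ⟨f0, hd0, hf0⟩ := count_poly' q 0 (by omega)
    obtain ⟨f1, hd1, hf1⟩ := count_poly' q 1 le_rfl
    refine ⟨fun k => if k % 2 = 0 then f0 else f1, ?_, ?_⟩
    · intro k _
      dsimp only
      split_ifs
      · exact hd0
      · exact hd1
    · intro n
      have : n % 2 ^ (q - 1) % 2 = n % 2 :=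
        Nat.mod_mod_of_dvd n (dvd_pow_self 2 (by omega))
      dsimp only
      rw [hu', this]
      split_ifs with h
      · exact hf0 n h
      · exact hf1 n (by omega)
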